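/- arXiv:1008.2449 — 2 statements merged into one kernel-verified Lean document; each statement's English description precedes it below -/
import Mathlib

section
/- Let X be a locally compact Hausdorff space and τ a topological measure on X. Then τ extends to a topological measure τ̂ on the one-point compactification X̂ = X ∪ {∞} (meaning τ̂(K) = τ(K) for every compact K ⊆ X and τ̂(U) = τ(U) for every open U ⊆ X with compact closure) with τ̂({∞}) = 0 if and only if τ is bounded, i.e. sup_{A ∈ 𝒜(X)} τ(A) < ∞; in that case the extension is unique and τ̂(X̂) = sup_{A ∈ 𝒜(X)} τ(A). -/
/-!
Let `ρ A = sup {τ K | K ⊆ A compact}` be the inner set function of `τ` (`innerVal`). By monotonicity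
and inner regularity it agrees with `τ` on all admissible sets, and the total mass `ρ X` is
`sup_{A ∈ 𝒜(X)} τ A`. Call a subset of `X` good if it is compact or open; the closed-or-open subsets
of `X̂` are exactly the good sets `A ⊆ X` together with the sets `Aᶜ ∪ {∞}`, `A ⊆ X` good.
An extension with `τ̂({∞}) = 0` is therefore forced to be
`τ̂ A = ρ A` if `∞ ∉ A`, and `τ̂ A = ρ X - ρ (X \ A)` if `∞ ∈ A` (`hatVal`, `eq_hatVal`):
inner regularity in `X̂` determines `τ̂` on the open subsets of `X`, in particular on `X` itself, and
additivity does the rest. This gives uniqueness and the value of `τ̂(X̂)`; boundedness of `τ` is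
monotonicity in `X̂`.

Conversely, if `τ` is bounded, `hatVal` is a topological measure. Everything follows from the additivity
of `ρ` on good sets with good union (`innerVal_union`). Superadditivity holds for arbitrary disjoint
sets; the only nontrivial reverse inequality is for `K ∪ U` open with `K` compact and `U` open, where a
compact `C ⊆ K ∪ U` is put into a relatively compact open `W ⊇ C ∪ K` with closure in `K ∪ U`, so that
`τ C ≤ τ W = τ K + τ (W \ K)`. Regularity at sets containing `∞` is obtained from regularity of `τ` by
taking complements.
-/

open Set Topology
open scoped CompactlySupported

noncomputable section

/-- The family `𝒜(X)` of admissible sets: compact sets together with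
open sets with compact closure. -/
def Admissible (X : Type*) [TopologicalSpace X] : Set (Set X) :=
  {A | IsCompact A ∨ (IsOpen A ∧ IsCompact (closure A))}

/-- A quasi-integral on `X`: a monotone, locally Lipschitz (w.r.t. the uniform norm,
on functions with support in a fixed compact set) functional on `C_c(X, ℝ)` which is
linear on every subspace of the form `{φ ∘ f | φ ∈ C(ℝ), φ 0 = 0}`. -/
structure QuasiIntegral (X : Type*) [TopologicalSpace X] where
  toFun : C_c(X, ℝ) → ℝ
  mono' : ∀ f g : C_c(X, ℝ), (∀ x, f x ≤ g x) → toFun f ≤ toFun g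
  lipschitz' : ∀ K : Set X, IsCompact K → ∃ N : ℝ, 0 ≤ N ∧
    ∀ f g : C_c(X, ℝ), tsupport ⇑f ⊆ K → tsupport ⇑g ⊆ K →
      |toFun f - toFun g| ≤ N * ⨆ x, |f x - g x|
  quasilin_add' : ∀ (f : C_c(X, ℝ)) (φ ψ : ℝ → ℝ), Continuous φ → Continuous ψ →
    φ 0 = 0 → ψ 0 = 0 → ∀ gφ gψ gs : C_c(X, ℝ),
    (∀ x, gφ x = φ (f x)) → (∀ x, gψ x = ψ (f x)) →
    (∀ x, gs x = φ (f x) + ψ (f x)) → toFun gs = toFun gφ + toFun gψ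
  quasilin_smul' : ∀ (f : C_c(X, ℝ)) (φ : ℝ → ℝ), Continuous φ → φ 0 = 0 →
    ∀ (c : ℝ) (gφ gc : C_c(X, ℝ)),
    (∀ x, gφ x = φ (f x)) → (∀ x, gc x = c * φ (f x)) → toFun gc = c * toFun gφ

/-- A topological measure on `X` (normalized to vanish on non-admissible sets):
a nonnegative, additive, monotone, regular set function on `𝒜(X)`. -/
structure TopMeasure (X : Type*) [TopologicalSpace X] where
  toFun : Set X → ℝ
  zero_of_not_mem' : ∀ A : Set X, A ∉ Admissible X → toFun A = 0
  nonneg' : ∀ A : Set X, 0 ≤ toFun A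
  additive' : ∀ A A' : Set X, A ∈ Admissible X → A' ∈ Admissible X →
    A ∪ A' ∈ Admissible X → Disjoint A A' → toFun (A ∪ A') = toFun A + toFun A'
  mono' : ∀ A A' : Set X, A ∈ Admissible X → A' ∈ Admissible X → A ⊆ A' →
    toFun A ≤ toFun A'
  outer_reg' : ∀ K : Set X, IsCompact K →
    toFun K = sInf (toFun '' {O : Set X | IsOpen O ∧ IsCompact (closure O) ∧ K ⊆ O})
  inner_reg' : ∀ O : Set X, IsOpen O → IsCompact (closure O) →
    toFun O = sSup (toFun '' {K : Set X | IsCompact K ∧ K ⊆ O})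

variable {X : Type*} [TopologicalSpace X]

/-- `τ_ζ(K) = inf {ζ(f) | f ∈ C_c(X), f ≥ 1_K}`, for `K` compact. -/
def tauCompact (ζ : QuasiIntegral X) (K : Set X) : ℝ :=
  sInf (ζ.toFun '' {f : C_c(X, ℝ) | ∀ x, K.indicator (fun _ => (1 : ℝ)) x ≤ f x})

/-- `τ_ζ(O) = sup {ζ(f) | f ∈ C_c(X), f ≤ 1_O}`, for `O` open with compact closure. -/
def tauOpen (ζ : QuasiIntegral X) (O : Set X) : ℝ :=
  sSup (ζ.toFun '' {f : C_c(X, ℝ) | ∀ x, f x ≤ O.indicator (fun _ => (1 : ℝ)) x})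

open scoped Classical in
/-- The induced set function `τ_ζ` of a quasi-integral `ζ`. -/
def inducedSetFun (ζ : QuasiIntegral X) (A : Set X) : ℝ :=
  if IsCompact A then tauCompact ζ A
  else if IsOpen A ∧ IsCompact (closure A) then tauOpen ζ A
  else 0

open scoped OnePoint in
/-- A topological measure `σ` on the one-point compactification `X̂ = X ∪ {∞}`
extends `τ` with `σ({∞}) = 0` if it agrees with `τ` on compact subsets of `X` and
on open subsets of `X` with compact closure (viewed inside `X̂`). -/
def IsOnePointExtension {X : Type*} [TopologicalSpace X] (τ : TopMeasure X)
    (σ : TopMeasure (OnePoint X)) : Prop :=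
  (∀ K : Set X, IsCompact K → σ.toFun ((fun x : X => (x : OnePoint X)) '' K) = τ.toFun K) ∧
  (∀ U : Set X, IsOpen U → IsCompact (closure U) →
      σ.toFun ((fun x : X => (x : OnePoint X)) '' U) = τ.toFun U) ∧
  σ.toFun {(∞ : OnePoint X)} = 0

namespace TopMeasure

open scoped OnePoint

/-- The inner set function `ρ A = sup {τ K | K ⊆ A compact}`, defined on all subsets of `X`.
The supremum is finite for bounded `τ` or admissible `A`; if it is infinite, the real
`sSup` takes the junk value `0`. -/
def innerVal (τ : TopMeasure X) (A : Set X) : ℝ :=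
  sSup (τ.toFun '' {K : Set X | IsCompact K ∧ K ⊆ A})

open scoped Classical in
/-- The candidate extension of `τ` to the one-point compactification, set to `0` outside the
admissible sets. -/
def hatVal (τ : TopMeasure X) (A : Set (OnePoint X)) : ℝ :=
  if A ∈ Admissible (OnePoint X) then
    if ∞ ∈ A then τ.innerVal univ - τ.innerVal ((fun x : X => (x : OnePoint X)) ⁻¹' A)ᶜ
    else τ.innerVal ((fun x : X => (x : OnePoint X)) ⁻¹' A)
  else 0

set_option linter.unusedSectionVars false

lemma ext_toFun {σ₁ σ₂ : TopMeasure (OnePoint X)} (h : σ₁.toFun = σ₂.toFun) : σ₁ = σ₂ := by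
  cases σ₁
  cases σ₂
  congr

lemma empty_val (τ : TopMeasure X) : τ.toFun ∅ = 0 := by
  have h0 : (∅ : Set X) ∈ Admissible X := Or.inl isCompact_empty
  have := τ.additive' ∅ ∅ h0 h0 (by simpa using h0) (by simp)
  simp at this
  exact this

/-! ### The inner set function -/

section Inner

variable {τ : TopMeasure X}

lemma bdd_inner (hB : BddAbove (τ.toFun '' Admissible X)) (A : Set X) :
    BddAbove (τ.toFun '' {K : Set X | IsCompact K ∧ K ⊆ A}) :=
  hB.mono (image_mono fun _ hK => Or.inl hK.1)

lemma le_innerVal (hB : BddAbove (τ.toFun '' Admissible X)) {K A : Set X} (hK : IsCompact K)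
    (h : K ⊆ A) : τ.toFun K ≤ τ.innerVal A :=
  le_csSup (bdd_inner hB A) ⟨K, ⟨hK, h⟩, rfl⟩

lemma innerVal_le {A : Set X} {c : ℝ} (h : ∀ K, IsCompact K → K ⊆ A → τ.toFun K ≤ c) :
    τ.innerVal A ≤ c := by
  refine csSup_le ⟨_, ∅, ⟨isCompact_empty, empty_subset _⟩, rfl⟩ ?_
  rintro _ ⟨K, ⟨hK, hKA⟩, rfl⟩
  exact h K hK hKA

lemma innerVal_nonneg (τ : TopMeasure X) (A : Set X) : 0 ≤ τ.innerVal A := by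
  refine Real.sSup_nonneg ?_
  rintro _ ⟨K, -, rfl⟩
  exact τ.nonneg' K

lemma innerVal_mono (hB : BddAbove (τ.toFun '' Admissible X)) {A B : Set X} (h : A ⊆ B) :
    τ.innerVal A ≤ τ.innerVal B :=
  innerVal_le fun _ hK hKA => le_innerVal hB hK (hKA.trans h)

lemma innerVal_compact {K : Set X} (hK : IsCompact K) : τ.innerVal K = τ.toFun K := by
  refine le_antisymm (innerVal_le fun C hC h => τ.mono' _ _ (Or.inl hC) (Or.inl hK) h) ?_
  refine le_csSup ⟨τ.toFun K, ?_⟩ ⟨K, ⟨hK, subset_rfl⟩, rfl⟩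
  rintro _ ⟨C, ⟨hC, h⟩, rfl⟩
  exact τ.mono' _ _ (Or.inl hC) (Or.inl hK) h

lemma innerVal_open {U : Set X} (hU : IsOpen U) (hc : IsCompact (closure U)) :
    τ.innerVal U = τ.toFun U :=
  (τ.inner_reg' U hU hc).symm

lemma innerVal_empty (τ : TopMeasure X) : τ.innerVal ∅ = 0 :=
  (innerVal_compact isCompact_empty).trans τ.empty_val

lemma innerVal_univ (hB : BddAbove (τ.toFun '' Admissible X)) :
    τ.innerVal univ = sSup (τ.toFun '' Admissible X) := by
  refine le_antisymm (innerVal_le fun K hK _ => le_csSup hB ⟨K, Or.inl hK, rfl⟩) ?_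
  refine csSup_le ⟨_, ∅, Or.inl isCompact_empty, rfl⟩ ?_
  rintro _ ⟨A, hA | hA, rfl⟩
  · exact le_innerVal hB hA (subset_univ _)
  · rw [← innerVal_open hA.1 hA.2]
    exact innerVal_mono hB (subset_univ _)

lemma innerVal_superadd (hB : BddAbove (τ.toFun '' Admissible X)) [T2Space X] {A B : Set X}
    (hd : Disjoint A B) : τ.innerVal A + τ.innerVal B ≤ τ.innerVal (A ∪ B) := by
  rw [← le_sub_iff_add_le]
  refine innerVal_le fun K hK hKA => ?_
  rw [le_sub_comm]
  refine innerVal_le fun C hC hCB => ?_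
  have := τ.additive' K C (Or.inl hK) (Or.inl hC) (Or.inl (hK.union hC)) (hd.mono hKA hCB)
  have := le_innerVal hB (hK.union hC) (union_subset_union hKA hCB)
  linarith

lemma innerVal_compact_union_open (hB : BddAbove (τ.toFun '' Admissible X)) [T2Space X]
    [LocallyCompactSpace X] {K U : Set X} (hK : IsCompact K) (hU : IsOpen U)
    (hd : Disjoint K U) (hKU : IsCompact (K ∪ U) ∨ IsOpen (K ∪ U)) :
    τ.innerVal (K ∪ U) ≤ τ.innerVal K + τ.innerVal U := by
  rcases hKU with h | h
  · have hc : IsCompact (closure U) := h.closure_of_subset subset_union_right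
    rw [innerVal_compact h, innerVal_compact hK, innerVal_open hU hc]
    exact (τ.additive' K U (Or.inl hK) (Or.inr ⟨hU, hc⟩) (Or.inl h) hd).le
  · refine innerVal_le fun C hC hCA => ?_
    obtain ⟨W, hW, hCW, hWA, hWc⟩ := exists_open_between_and_isCompact_closure (hC.union hK) h
      (union_subset hCA subset_union_left)
    have hCW' := union_subset_iff.1 hCW
    have hWK : IsOpen (W \ K) := hW.sdiff hK.isClosed
    have hWKc : IsCompact (closure (W \ K)) := hWc.of_isClosed_subset isClosed_closure
      (closure_mono sdiff_subset)
    have hun : K ∪ W \ K = W := union_sdiff_cancel hCW'.2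
    have h1 := τ.additive' K (W \ K) (Or.inl hK) (Or.inr ⟨hWK, hWKc⟩)
      (by rw [hun]; exact Or.inr ⟨hW, hWc⟩) disjoint_sdiff_right
    have h2 := τ.mono' C W (Or.inl hC) (Or.inr ⟨hW, hWc⟩) hCW'.1
    have h3 : τ.innerVal (W \ K) ≤ τ.innerVal U := innerVal_mono hB fun x hx =>
      (hWA (subset_closure hx.1)).resolve_left hx.2
    rw [hun] at h1
    rw [innerVal_open hWK hWKc] at h3
    rw [innerVal_compact hK]
    linarith

/-- Additivity of the inner set function on compact and open sets. -/
lemma innerVal_union (hB : BddAbove (τ.toFun '' Admissible X)) [T2Space X]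
    [LocallyCompactSpace X] {A B : Set X} (hA : IsCompact A ∨ IsOpen A)
    (hA' : IsCompact B ∨ IsOpen B) (hAB : IsCompact (A ∪ B) ∨ IsOpen (A ∪ B))
    (hd : Disjoint A B) : τ.innerVal (A ∪ B) = τ.innerVal A + τ.innerVal B := by
  refine le_antisymm ?_ (innerVal_superadd hB hd)
  rcases hA with hA | hA <;> rcases hA' with hA' | hA'
  · rw [innerVal_compact hA, innerVal_compact hA', innerVal_compact (hA.union hA')]
    exact (τ.additive' _ _ (Or.inl hA) (Or.inl hA') (Or.inl (hA.union hA')) hd).le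
  · exact innerVal_compact_union_open hB hA hA' hd hAB
  · rw [union_comm, add_comm]
    exact innerVal_compact_union_open hB hA' hA hd.symm (by rwa [union_comm])
  · refine innerVal_le fun C hC hCA => ?_
    have h1 : IsCompact (C \ B) := hC.diff hA'
    have h2 : IsCompact (C \ A) := hC.diff hA
    have e : C = C \ B ∪ C \ A := by
      ext x
      have h3 : x ∈ A → x ∉ B := fun hx => Set.disjoint_left.1 hd hx
      have h4 : x ∈ C → x ∈ A ∨ x ∈ B := fun hx => hCA hx
      simp only [mem_union, mem_sdiff]
      tauto
    have hdd : Disjoint (C \ B) (C \ A) := by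
      rw [Set.disjoint_left]
      rintro x ⟨hx, hxB⟩ ⟨-, hxA⟩
      exact (hCA hx).elim hxA hxB
    have h3 := τ.additive' _ _ (Or.inl h1) (Or.inl h2) (by rw [← e]; exact Or.inl hC) hdd
    rw [← e] at h3
    have h4 := le_innerVal hB h1 (A := A) fun x hx => (hCA hx.1).resolve_right hx.2
    have h5 := le_innerVal hB h2 (A := B) fun x hx => (hCA hx.1).resolve_left hx.2
    linarith

end Inner

/-! ### Closed and open subsets of the one-point compactification -/

section OnePointSets

lemma isCompact_preimage {A : Set (OnePoint X)} (hA : IsClosed A) (h : ∞ ∉ A) :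
    IsCompact ((fun x : X => (x : OnePoint X)) ⁻¹' A) := by
  have := (OnePoint.isOpen_def.1 hA.isOpen_compl).1 h
  simpa [← preimage_compl] using this

lemma preimage_coe (A : Set X) :
    (fun x : X => (x : OnePoint X)) ⁻¹' ((fun x : X => (x : OnePoint X)) '' A) = A :=
  preimage_image_eq _ OnePoint.coe_injective

lemma coe_preimage {A : Set (OnePoint X)} (h : ∞ ∉ A) :
    (fun x : X => (x : OnePoint X)) '' ((fun x : X => (x : OnePoint X)) ⁻¹' A) = A := by
  ext x
  induction x using OnePoint.rec with
  | infty => simp [h]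
  | coe x => simp

lemma isCompact_coe {K : Set X} (hK : IsCompact K) :
    IsCompact ((fun x : X => (x : OnePoint X)) '' K) :=
  hK.image OnePoint.continuous_coe

lemma isOpen_coe {U : Set X} (hU : IsOpen U) :
    IsOpen ((fun x : X => (x : OnePoint X)) '' U) :=
  OnePoint.isOpenEmbedding_coe.isOpenMap U hU

variable [T2Space X] [LocallyCompactSpace X]

lemma admissible_onePoint {A : Set (OnePoint X)} :
    A ∈ Admissible (OnePoint X) ↔ IsClosed A ∨ IsOpen A := by
  constructor
  · rintro (h | h)
    exacts [Or.inl h.isClosed, Or.inr h.1]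
  · rintro (h | h)
    exacts [Or.inl h.isCompact, Or.inr ⟨h, isClosed_closure.isCompact⟩]

lemma admissible_compl {A : Set (OnePoint X)} (hA : A ∈ Admissible (OnePoint X)) :
    Aᶜ ∈ Admissible (OnePoint X) := by
  rw [admissible_onePoint] at *
  simpa [or_comm] using hA

lemma good_preimage {A : Set (OnePoint X)} (hA : A ∈ Admissible (OnePoint X)) (h : ∞ ∉ A) :
    IsCompact ((fun x : X => (x : OnePoint X)) ⁻¹' A) ∨
      IsOpen ((fun x : X => (x : OnePoint X)) ⁻¹' A) :=
  (admissible_onePoint.1 hA).imp (isCompact_preimage · h) fun hA => (OnePoint.isOpen_def.1 hA).2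

end OnePointSets

/-! ### The extension -/

section Extension

variable {τ : TopMeasure X}

lemma hatVal_of_mem {A : Set (OnePoint X)} (hA : A ∈ Admissible (OnePoint X)) (h : ∞ ∈ A) :
    τ.hatVal A =
      τ.innerVal univ - τ.innerVal ((fun x : X => (x : OnePoint X)) ⁻¹' Aᶜ) := by
  simp [hatVal, hA, h]

lemma hatVal_of_notMem {A : Set (OnePoint X)} (hA : A ∈ Admissible (OnePoint X)) (h : ∞ ∉ A) :
    τ.hatVal A = τ.innerVal ((fun x : X => (x : OnePoint X)) ⁻¹' A) := by
  simp [hatVal, hA, h]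

variable [T2Space X] [LocallyCompactSpace X]

/-- Complementation exchanges the two cases in the definition of `hatVal`. -/
lemma hatVal_compl {A : Set (OnePoint X)} (hA : A ∈ Admissible (OnePoint X)) :
    τ.hatVal A = τ.innerVal univ - τ.hatVal Aᶜ := by
  by_cases h : ∞ ∈ A
  · rw [hatVal_of_mem hA h, hatVal_of_notMem (admissible_compl hA) (by simpa using h)]
  · rw [hatVal_of_notMem hA h, hatVal_of_mem (admissible_compl hA) h, compl_compl]
    ring

lemma hatVal_mono (hB : BddAbove (τ.toFun '' Admissible X)) {A B : Set (OnePoint X)}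
    (hA : A ∈ Admissible (OnePoint X)) (hA' : B ∈ Admissible (OnePoint X)) (h : A ⊆ B) :
    τ.hatVal A ≤ τ.hatVal B := by
  by_cases hb : ∞ ∈ B
  · rw [hatVal_of_mem hA' hb]
    by_cases ha : ∞ ∈ A
    · rw [hatVal_of_mem hA ha]
      have := innerVal_mono hB (preimage_mono (f := fun x : X => (x : OnePoint X))
        (compl_subset_compl.2 h))
      linarith
    · rw [hatVal_of_notMem hA ha]
      have hd : Disjoint ((fun x : X => (x : OnePoint X)) ⁻¹' A)
          ((fun x : X => (x : OnePoint X)) ⁻¹' Bᶜ) :=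
        (disjoint_compl_right_iff_subset.2 h).preimage _
      have h1 := innerVal_superadd hB hd
      have h2 := innerVal_mono hB (subset_univ ((fun x : X => (x : OnePoint X)) ⁻¹' A ∪
        (fun x : X => (x : OnePoint X)) ⁻¹' Bᶜ))
      linarith
  · rw [hatVal_of_notMem hA' hb, hatVal_of_notMem hA fun ha => hb (h ha)]
    exact innerVal_mono hB (preimage_mono h)

lemma hatVal_nonneg (hB : BddAbove (τ.toFun '' Admissible X)) (A : Set (OnePoint X)) :
    0 ≤ τ.hatVal A := by
  by_cases hA : A ∈ Admissible (OnePoint X)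
  · have h0 : (∅ : Set (OnePoint X)) ∈ Admissible (OnePoint X) := Or.inl isCompact_empty
    have := hatVal_mono hB h0 hA (empty_subset _)
    rw [hatVal_of_notMem h0 (by simp)] at this
    exact (innerVal_nonneg _ _).trans this
  · simp [hatVal, hA]

lemma hatVal_union_of_notMem (hB : BddAbove (τ.toFun '' Admissible X)) {A B : Set (OnePoint X)}
    (hA : A ∈ Admissible (OnePoint X)) (hA' : B ∈ Admissible (OnePoint X))
    (hAB : A ∪ B ∈ Admissible (OnePoint X)) (hd : Disjoint A B) (ha : ∞ ∉ A) (hb : ∞ ∉ B) :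
    τ.hatVal (A ∪ B) = τ.hatVal A + τ.hatVal B := by
  have hab : ∞ ∉ A ∪ B := by simp [ha, hb]
  rw [hatVal_of_notMem hA ha, hatVal_of_notMem hA' hb, hatVal_of_notMem hAB hab, preimage_union]
  exact innerVal_union hB (good_preimage hA ha) (good_preimage hA' hb) (good_preimage hAB hab)
    (hd.preimage _)

/-- If `∞ ∈ A`, additivity for `A ∪ B` is additivity for `(A ∪ B)ᶜ ∪ B = Aᶜ`. -/
lemma hatVal_union_of_mem (hB : BddAbove (τ.toFun '' Admissible X)) {A B : Set (OnePoint X)}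
    (hA : A ∈ Admissible (OnePoint X)) (hA' : B ∈ Admissible (OnePoint X))
    (hAB : A ∪ B ∈ Admissible (OnePoint X)) (hd : Disjoint A B) (ha : ∞ ∈ A) :
    τ.hatVal (A ∪ B) = τ.hatVal A + τ.hatVal B := by
  have hb : ∞ ∉ B := fun hb => Set.disjoint_left.1 hd ha hb
  have e : (A ∪ B)ᶜ ∪ B = Aᶜ := by
    ext x
    have : x ∈ A → x ∉ B := fun hx => Set.disjoint_left.1 hd hx
    simp only [mem_union, mem_compl_iff]
    tauto
  have h := hatVal_union_of_notMem hB (admissible_compl hAB) hA'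
    (by rw [e]; exact admissible_compl hA)
    (disjoint_compl_left_iff_subset.2 subset_union_right) (by simp [ha]) hb
  rw [e] at h
  rw [hatVal_compl hA, hatVal_compl hAB]
  linarith

lemma hatVal_coe_compact {K : Set X} (hK : IsCompact K) :
    τ.hatVal ((fun x : X => (x : OnePoint X)) '' K) = τ.toFun K := by
  rw [hatVal_of_notMem (Or.inl (isCompact_coe hK)) (by simp), preimage_coe, innerVal_compact hK]

lemma hatVal_coe_open {U : Set X} (hU : IsOpen U) (hc : IsCompact (closure U)) :
    τ.hatVal ((fun x : X => (x : OnePoint X)) '' U) = τ.toFun U := by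
  rw [hatVal_of_notMem (admissible_onePoint.2 (Or.inr (isOpen_coe hU))) (by simp), preimage_coe,
    innerVal_open hU hc]

/-- Approximation of closed sets by open supersets: from outside for `∞ ∉ K`, and by inner
approximation of the complement for `∞ ∈ K`. -/
lemma hatVal_outer (τ : TopMeasure X) {K : Set (OnePoint X)}
    (hK : IsClosed K) {c : ℝ} (h : τ.hatVal K < c) :
    ∃ O, IsOpen O ∧ K ⊆ O ∧ τ.hatVal O < c := by
  have hKA : K ∈ Admissible (OnePoint X) := Or.inl hK.isCompact
  by_cases hi : ∞ ∈ K
  · rw [hatVal_of_mem hKA hi, sub_lt_comm] at h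
    obtain ⟨_, ⟨C, ⟨hC, hCK⟩, rfl⟩, hlt⟩ :=
      exists_lt_of_lt_csSup (by exact ⟨_, ∅, ⟨isCompact_empty, empty_subset _⟩, rfl⟩) h
    have hO : IsOpen ((fun x : X => (x : OnePoint X)) '' C)ᶜ :=
      (isCompact_coe hC).isClosed.isOpen_compl
    refine ⟨_, hO, ?_, ?_⟩
    · rw [subset_compl_comm]
      exact image_subset_iff.2 hCK
    · rw [hatVal_compl (admissible_onePoint.2 (Or.inr hO)), compl_compl, hatVal_coe_compact hC]
      linarith
  · have hP := isCompact_preimage hK hi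
    rw [hatVal_of_notMem hKA hi, innerVal_compact hP, τ.outer_reg' _ hP] at h
    obtain ⟨W, hW, hPW, -, hWc⟩ :=
      exists_open_between_and_isCompact_closure hP isOpen_univ (subset_univ _)
    obtain ⟨_, ⟨O, ⟨hO, hOc, hPO⟩, rfl⟩, hlt⟩ :=
      exists_lt_of_csInf_lt (by exact ⟨_, W, ⟨hW, hWc, hPW⟩, rfl⟩) h
    refine ⟨_, isOpen_coe hO, ?_, (hatVal_coe_open hO hOc).trans_lt hlt⟩
    rw [← coe_preimage hi]
    exact image_mono hPO

/-- The bounded topological measure `τ` extended to the one-point compactification. -/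
def hat (τ : TopMeasure X) (hB : BddAbove (τ.toFun '' Admissible X)) :
    TopMeasure (OnePoint X) where
  toFun := τ.hatVal
  zero_of_not_mem' A hA := by simp [hatVal, hA]
  nonneg' := hatVal_nonneg hB
  mono' _ _ hA hA' h := hatVal_mono hB hA hA' h
  additive' A B hA hA' hAB hd := by
    by_cases ha : ∞ ∈ A
    · exact hatVal_union_of_mem hB hA hA' hAB hd ha
    by_cases hb : ∞ ∈ B
    · rw [union_comm, add_comm]
      exact hatVal_union_of_mem hB hA' hA (by rwa [union_comm]) hd.symm hb
    · exact hatVal_union_of_notMem hB hA hA' hAB hd ha hb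
  outer_reg' K hK := by
    symm
    refine csInf_eq_of_forall_ge_of_forall_gt_exists_lt
      ⟨_, univ, ⟨isOpen_univ, isClosed_closure.isCompact, subset_univ _⟩, rfl⟩ ?_ ?_
    · rintro _ ⟨O, ⟨hO, hOc, hKO⟩, rfl⟩
      exact hatVal_mono hB (Or.inl hK) (Or.inr ⟨hO, hOc⟩) hKO
    · intro c hc
      obtain ⟨O, hO, hKO, hlt⟩ := hatVal_outer τ hK.isClosed hc
      exact ⟨_, ⟨O, ⟨hO, isClosed_closure.isCompact, hKO⟩, rfl⟩, hlt⟩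
  inner_reg' O hO hOc := by
    symm
    refine csSup_eq_of_forall_le_of_forall_lt_exists_gt
      ⟨_, ∅, ⟨isCompact_empty, empty_subset _⟩, rfl⟩ ?_ ?_
    · rintro _ ⟨K, ⟨hK, hKO⟩, rfl⟩
      exact hatVal_mono hB (Or.inl hK) (Or.inr ⟨hO, hOc⟩) hKO
    · intro c hc
      rw [hatVal_compl (Or.inr ⟨hO, hOc⟩), lt_sub_comm] at hc
      obtain ⟨V, hV, hKV, hlt⟩ := hatVal_outer τ hO.isClosed_compl hc
      refine ⟨_, ⟨Vᶜ, ⟨hV.isClosed_compl.isCompact, compl_subset_comm.1 hKV⟩, rfl⟩, ?_⟩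
      have := hatVal_compl (τ := τ) (admissible_onePoint.2 (Or.inr hV))
      linarith

lemma hat_extends (hB : BddAbove (τ.toFun '' Admissible X)) :
    IsOnePointExtension τ (τ.hat hB) := by
  refine ⟨fun K hK => hatVal_coe_compact hK, fun U hU hc => hatVal_coe_open hU hc, ?_⟩
  have e : (fun x : X => (x : OnePoint X)) ⁻¹' {(∞ : OnePoint X)}ᶜ = univ := by
    ext x
    simp
  change τ.hatVal _ = 0
  rw [hatVal_of_mem (Or.inl isCompact_singleton) rfl, e, sub_self]

end Extension

/-! ### Uniqueness -/

section Uniqueness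

variable [T2Space X] [LocallyCompactSpace X] {τ : TopMeasure X} {σ : TopMeasure (OnePoint X)}

lemma bdd_of_extends (h : IsOnePointExtension τ σ) : BddAbove (τ.toFun '' Admissible X) := by
  have hu : (univ : Set (OnePoint X)) ∈ Admissible (OnePoint X) := Or.inl isCompact_univ
  refine ⟨σ.toFun univ, ?_⟩
  rintro _ ⟨A, hA | hA, rfl⟩
  · rw [← h.1 A hA]
    exact σ.mono' _ _ (Or.inl (isCompact_coe hA)) hu (subset_univ _)
  · rw [← h.2.1 A hA.1 hA.2]
    exact σ.mono' _ _ (admissible_onePoint.2 (Or.inr (isOpen_coe hA.1))) hu (subset_univ _)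

lemma eq_innerVal (h : IsOnePointExtension τ σ) {A : Set (OnePoint X)}
    (hA : A ∈ Admissible (OnePoint X)) (hi : ∞ ∉ A) :
    σ.toFun A = τ.innerVal ((fun x : X => (x : OnePoint X)) ⁻¹' A) := by
  rcases admissible_onePoint.1 hA with hc | ho
  · have hP := isCompact_preimage hc hi
    rw [innerVal_compact hP, ← h.1 _ hP, coe_preimage hi]
  · rw [σ.inner_reg' A ho isClosed_closure.isCompact, innerVal]
    congr 1
    ext r
    constructor
    · rintro ⟨K, ⟨hK, hKA⟩, rfl⟩
      have hP := isCompact_preimage hK.isClosed fun hk => hi (hKA hk)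
      refine ⟨_, ⟨hP, preimage_mono hKA⟩, ?_⟩
      rw [← h.1 _ hP, coe_preimage fun hk => hi (hKA hk)]
    · rintro ⟨K, ⟨hK, hKA⟩, rfl⟩
      exact ⟨_, ⟨isCompact_coe hK, image_subset_iff.2 hKA⟩, h.1 K hK⟩

/-- An extension vanishing at `∞` has total mass `σ X + σ {∞} = ρ X`. -/
lemma univ_eq_innerVal (h : IsOnePointExtension τ σ) :
    σ.toFun univ = τ.innerVal univ := by
  have hs : ({∞} : Set (OnePoint X)) ∈ Admissible (OnePoint X) := Or.inl isCompact_singleton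
  have hu : (univ : Set (OnePoint X)) ∈ Admissible (OnePoint X) := Or.inl isCompact_univ
  have h1 := σ.additive' _ _ hs (admissible_compl hs) (by rwa [union_compl_self])
    disjoint_compl_right
  rw [union_compl_self, h.2.2, zero_add, eq_innerVal h (admissible_compl hs) (by simp)] at h1
  rw [h1]
  congr 1
  ext x
  simp

lemma eq_hatVal (h : IsOnePointExtension τ σ) (A : Set (OnePoint X)) :
    σ.toFun A = τ.hatVal A := by
  by_cases hA : A ∈ Admissible (OnePoint X)
  · by_cases hi : ∞ ∈ A
    · have h1 := σ.additive' _ _ hA (admissible_compl hA)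
        (by rw [union_compl_self]; exact Or.inl isCompact_univ) disjoint_compl_right
      rw [union_compl_self, univ_eq_innerVal h,
        eq_innerVal h (admissible_compl hA) (by simpa using hi)] at h1
      rw [hatVal_of_mem hA hi]
      linarith
    · rw [hatVal_of_notMem hA hi, eq_innerVal h hA hi]
  · rw [σ.zero_of_not_mem' A hA]
    simp [hatVal, hA]

end Uniqueness

end TopMeasure

/-- a topological measure `τ` on `X` extends to a topological measure
`τ̂` on the one-point compactification `X̂` with `τ̂({∞}) = 0` if and only if `τ` is
bounded; in that case the extension is unique and `τ̂(X̂) = sup_{A ∈ 𝒜(X)} τ(A)`. -/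
theorem topMeasure_extends_onePoint_iff_bounded {X : Type*} [TopologicalSpace X]
    [T2Space X] [LocallyCompactSpace X] (τ : TopMeasure X) :
    ((∃ σ : TopMeasure (OnePoint X), IsOnePointExtension τ σ) ↔
      BddAbove (τ.toFun '' Admissible X)) ∧
    (∀ σ₁ σ₂ : TopMeasure (OnePoint X),
      IsOnePointExtension τ σ₁ → IsOnePointExtension τ σ₂ → σ₁ = σ₂) ∧
    (∀ σ : TopMeasure (OnePoint X), IsOnePointExtension τ σ →
      σ.toFun Set.univ = sSup (τ.toFun '' Admissible X)) := by
  refine ⟨⟨fun ⟨σ, h⟩ => TopMeasure.bdd_of_extends h, fun hB => ⟨_, TopMeasure.hat_extends hB⟩⟩,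
    fun σ₁ σ₂ h₁ h₂ => TopMeasure.ext_toFun (funext fun A => ?_), fun σ h => ?_⟩
  · rw [TopMeasure.eq_hatVal h₁, TopMeasure.eq_hatVal h₂]
  · rw [TopMeasure.univ_eq_innerVal h, TopMeasure.innerVal_univ (TopMeasure.bdd_of_extends h)]

end
end

section
/- Let X be a locally compact Hausdorff space and ζ a quasi-integral on X. Then ζ is globally Lipschitz (i.e. there exists N ≥ 0 with |ζ(f) − ζ(g)| ≤ N‖f − g‖ for all f, g ∈ C_c(X)) if and only if the induced set function τ_ζ is bounded, i.e. sup_{A ∈ 𝒜(X)} τ_ζ(A) < ∞; moreover, in that case N = sup_{A ∈ 𝒜(X)} τ_ζ(A) is a global Lipschitz constant for ζ. -/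
/-!
Let `T = sup τ_ζ` and `c = ‖f - g‖`. If `h` is a `[0, 1]`-valued cutoff function equal to `1` on
`supp f ∪ supp g`, then `f ≤ g + c • h`, and `ζ(h) ≤ τ_ζ(supp h) ≤ T`. Hence
`ζ(f) - ζ(g) ≤ c * T` as soon as `ζ(g + c • h) = ζ(g) + c * ζ(h)`, and exchanging `f` and `g`
gives the Lipschitz estimate with constant `T`.

The additivity is `QuasiIntegral.map_add_smul`. It does not follow from a single use of
quasi-linearity when `g` changes sign: the range of `(g, h)` is then T-shaped and cannot be
parametrized by one function `u` as `(φ ∘ u, ψ ∘ u)`. Write `g⁻ = max (-g) 0`. With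
`q = -min g⁻ c` and `r = min (g + c) 0 = min (g + c • h) 0`, one has
`g = g⁺ + r + q` and `g + c • h = p + g⁺ + r`, where `p = c • h + q` is the truncation of
`(g + c • h)⁺` at height `c`. Each of these splittings is by functions of one element of
`C_c(X)`; for `p` this element is `c • h - q`, because `q` vanishes where `h < 1`.

Conversely, a global Lipschitz constant bounds `ζ` on functions with values in `[0, 1]`, and
therefore bounds `τ_ζ`.
-/

open Set Topology
open scoped CompactlySupported

noncomputable section

variable {X : Type*} [TopologicalSpace X]

/-- Every `φ ∘ f` with `φ` continuous and `φ 0 = 0` is again in `C_c(X)`. -/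
lemma exists_comp (f : C_c(X, ℝ)) (φ : ℝ → ℝ) (hφ : Continuous φ) (h0 : φ 0 = 0) :
    ∃ g : C_c(X, ℝ), ∀ x, g x = φ (f x) :=
  ⟨f.compLeft ⟨φ, hφ⟩, fun x => CompactlySupportedContinuousMap.compLeft_apply h0 f x⟩

lemma QuasiIntegral.map_smul (ζ : QuasiIntegral X) (c : ℝ) (f : C_c(X, ℝ)) :
    ζ.toFun (c • f) = c * ζ.toFun f :=
  ζ.quasilin_smul' f id continuous_id rfl c f (c • f) (fun _ => rfl) (fun _ => by simp)

lemma QuasiIntegral.map_zero (ζ : QuasiIntegral X) : ζ.toFun 0 = 0 := by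
  simpa using ζ.map_smul 0 0

/-- A quasi-integral is additive on `g` and `c • h` when `c ≥ 0` and `h` is a cutoff function
equal to `1` on the support of `g`. In general `g` and `h` are not functions of a single
`u ∈ C_c(X)`, since `g` may change sign, so both `g` and `g + c • h` are cut into pieces that
are. -/
lemma QuasiIntegral.map_add_smul (ζ : QuasiIntegral X) (g h : C_c(X, ℝ)) (c : ℝ) (hc : 0 ≤ c)
    (h0 : ∀ x, 0 ≤ h x) (h1 : ∀ x, h x ≤ 1) (hg : ∀ x, g x ≠ 0 → h x = 1) :
    ζ.toFun (g + c • h) = ζ.toFun g + c * ζ.toFun h := by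
  have key : ∀ x, (0 ≤ c * h x ∧ c * h x ≤ c) ∧ (g x = 0 ∨ c * h x = c) := fun x =>
    ⟨⟨mul_nonneg hc (h0 x), by nlinarith [h1 x]⟩, by
      by_cases hx : g x = 0
      · exact Or.inl hx
      · exact Or.inr (by rw [hg x hx, mul_one])⟩
  obtain ⟨gp, hgp⟩ := exists_comp g (fun t => max t 0) (by fun_prop) (by simp)
  obtain ⟨gn, hgn⟩ := exists_comp g (fun t => min t 0) (by fun_prop) (by simp)
  obtain ⟨r, hr⟩ := exists_comp g (fun t => min (t + c) 0) (by fun_prop) (by simp [hc])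
  obtain ⟨q, hq⟩ := exists_comp g (fun t => max (min t 0) (-c)) (by fun_prop) (by simp [hc])
  obtain ⟨Gp, hGp⟩ := exists_comp (g + c • h) (fun t => max t 0) (by fun_prop) (by simp)
  obtain ⟨p, hp⟩ := exists_comp (g + c • h) (fun t => min (max t 0) c) (by fun_prop)
    (by simp [hc])
  -- `g = g⁺ - g⁻`
  have e1 : ζ.toFun g = ζ.toFun gp + ζ.toFun gn :=
    ζ.quasilin_add' g (fun t => max t 0) (fun t => min t 0) (by fun_prop) (by fun_prop)
      (by simp) (by simp) gp gn g hgp hgn (fun x => by grind)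
  -- truncation of the negative part of `g` at height `c`
  have e2 : ζ.toFun gn = ζ.toFun r + ζ.toFun q :=
    ζ.quasilin_add' g (fun t => min (t + c) 0) (fun t => max (min t 0) (-c)) (by fun_prop)
      (by fun_prop) (by simp [hc]) (by simp [hc]) r q gn hr hq (fun x => by grind)
  -- the negative part of `g + c • h` only sees `{h = 1}`
  have e3 : ζ.toFun (g + c • h) = ζ.toFun Gp + ζ.toFun r :=
    ζ.quasilin_add' (g + c • h) (fun t => max t 0) (fun t => min t 0) (by fun_prop)
      (by fun_prop) (by simp) (by simp) Gp r _ hGp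
      (fun x => by
        have := key x
        simp only [hr, CompactlySupportedContinuousMap.add_apply,
          CompactlySupportedContinuousMap.smul_apply, smul_eq_mul]
        grind)
      (fun x => by grind)
  -- truncation of the positive part of `g + c • h` at height `c`
  have e4 : ζ.toFun Gp = ζ.toFun p + ζ.toFun gp :=
    ζ.quasilin_add' (g + c • h) (fun t => min (max t 0) c) (fun t => max (t - c) 0)
      (by fun_prop) (by fun_prop) (by simp [hc]) (by simp [hc]) p gp Gp hp
      (fun x => by
        have := key x
        simp only [hgp, CompactlySupportedContinuousMap.add_apply,
          CompactlySupportedContinuousMap.smul_apply, smul_eq_mul]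
        grind)
      (fun x => by rw [hGp]; grind)
  -- `p = c • h + q`, and `c • h`, `q` are both functions of `c • h - q`, as `q` vanishes
  -- wherever `h < 1`
  have e5 : ζ.toFun p = ζ.toFun (c • h) + ζ.toFun q :=
    ζ.quasilin_add' (c • h - q) (fun t => min t c) (fun t => -max (t - c) 0)
      (by fun_prop) (by fun_prop) (by simp [hc]) (by simp [hc]) (c • h) q p
      (fun x => by
        have := key x
        have := hq x
        simp only [CompactlySupportedContinuousMap.sub_apply,
          CompactlySupportedContinuousMap.smul_apply, smul_eq_mul]
        grind)
      (fun x => by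
        have := key x
        have := hq x
        simp only [CompactlySupportedContinuousMap.sub_apply,
          CompactlySupportedContinuousMap.smul_apply, smul_eq_mul]
        grind)
      (fun x => by
        have := key x
        have := hq x
        have := hp x
        simp only [CompactlySupportedContinuousMap.sub_apply,
          CompactlySupportedContinuousMap.add_apply,
          CompactlySupportedContinuousMap.smul_apply, smul_eq_mul] at *
        grind)
  rw [ζ.map_smul] at e5
  linarith

lemma le_iSup_abs_sub (f g : C_c(X, ℝ)) (x : X) : |f x - g x| ≤ ⨆ x, |f x - g x| := by
  obtain ⟨C, hC⟩ := (f - g).hasCompactSupport.exists_bound_of_continuous (f - g).continuous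
  exact le_ciSup (f := fun x => |f x - g x|) ⟨C, by rintro _ ⟨y, rfl⟩; simpa using hC y⟩ x

lemma exists_cutoff [T2Space X] [LocallyCompactSpace X] {K : Set X} (hK : IsCompact K) :
    ∃ h : C_c(X, ℝ), (∀ x ∈ K, h x = 1) ∧ ∀ x, 0 ≤ h x ∧ h x ≤ 1 := by
  obtain ⟨h, h1, -, hs, hI⟩ :=
    exists_continuous_one_zero_of_isCompact hK isClosed_empty (disjoint_empty K)
  exact ⟨⟨h, hs⟩, fun x hx => h1 hx, hI⟩

lemma nonneg_of_indicator_le {K : Set X} {f : C_c(X, ℝ)}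
    (hf : ∀ x, K.indicator (fun _ => (1 : ℝ)) x ≤ f x) (x : X) : 0 ≤ f x :=
  (indicator_nonneg (fun _ _ => zero_le_one) x).trans (hf x)

lemma indicator_le_of_cutoff {K : Set X} {h : C_c(X, ℝ)} (h1 : ∀ x ∈ K, h x = 1)
    (h0 : ∀ x, 0 ≤ h x) (x : X) : K.indicator (fun _ => (1 : ℝ)) x ≤ h x := by
  by_cases hx : x ∈ K <;> simp [hx, h1, h0]

/-- One-sided Lipschitz estimate: `f ≤ g + ‖f - g‖ • h` for a cutoff function `h` of the union
of the supports, and `ζ(h) ≤ τ_ζ(supp h)`. -/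
lemma QuasiIntegral.sub_le [T2Space X] [LocallyCompactSpace X] (ζ : QuasiIntegral X)
    (hb : BddAbove (inducedSetFun ζ '' Admissible X)) (f g : C_c(X, ℝ)) :
    ζ.toFun f - ζ.toFun g ≤ sSup (inducedSetFun ζ '' Admissible X) * ⨆ x, |f x - g x| := by
  obtain ⟨h, h1, hI⟩ := exists_cutoff (f.hasCompactSupport.isCompact.union
    g.hasCompactSupport.isCompact)
  have hc : 0 ≤ ⨆ x, |f x - g x| := Real.iSup_nonneg fun _ => abs_nonneg _
  have hle := le_iSup_abs_sub f g
  set c := ⨆ x, |f x - g x|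
  have hadd := ζ.map_add_smul g h c hc (fun x => (hI x).1) (fun x => (hI x).2)
    (fun x hx => h1 x (Or.inr (subset_tsupport _ hx)))
  have hmono : ζ.toFun f ≤ ζ.toFun (g + c • h) := by
    refine ζ.mono' _ _ fun x => ?_
    simp only [CompactlySupportedContinuousMap.add_apply,
      CompactlySupportedContinuousMap.smul_apply, smul_eq_mul]
    by_cases hx : x ∈ tsupport f ∪ tsupport g
    · rw [h1 x hx]
      linarith [le_abs_self (f x - g x), hle x]
    · have hf : f x = 0 := image_eq_zero_of_notMem_tsupport fun h' => hx (Or.inl h')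
      have hg : g x = 0 := image_eq_zero_of_notMem_tsupport fun h' => hx (Or.inr h')
      rw [hf, hg, zero_add]
      exact mul_nonneg hc (hI x).1
  have hK : IsCompact (tsupport h) := h.hasCompactSupport.isCompact
  have hT : ζ.toFun h ≤ sSup (inducedSetFun ζ '' Admissible X) := by
    refine le_trans ?_ (le_csSup hb ⟨tsupport h, Or.inl hK, rfl⟩)
    rw [inducedSetFun, if_pos hK, tauCompact]
    obtain ⟨k, k1, kI⟩ := exists_cutoff hK
    refine le_csInf ⟨_, k, indicator_le_of_cutoff k1 fun x => (kI x).1, rfl⟩ ?_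
    rintro _ ⟨u, hu, rfl⟩
    refine ζ.mono' _ _ fun x => le_trans ?_ (hu x)
    by_cases hx : x ∈ tsupport h
    · simpa [hx] using (hI x).2
    · simp [hx, image_eq_zero_of_notMem_tsupport hx]
  nlinarith [mul_le_mul_of_nonneg_left hT hc]

/-- A global Lipschitz constant bounds `τ_ζ`: test it against `0` on functions with values in
`[0, 1]`. -/
lemma inducedSetFun_le_of_lipschitz [T2Space X] [LocallyCompactSpace X] (ζ : QuasiIntegral X)
    {N : ℝ} (hN : 0 ≤ N)
    (hL : ∀ f g : C_c(X, ℝ), |ζ.toFun f - ζ.toFun g| ≤ N * ⨆ x, |f x - g x|) (A : Set X) :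
    inducedSetFun ζ A ≤ N := by
  have hb : ∀ h : C_c(X, ℝ), (∀ x, 0 ≤ h x ∧ h x ≤ 1) → ζ.toFun h ≤ N := fun h hI => by
    have h2 := hL h 0
    rw [ζ.map_zero, sub_zero] at h2
    have h3 : ⨆ x, |h x - (0 : C_c(X, ℝ)) x| ≤ 1 :=
      Real.iSup_le (fun x => by simpa [abs_of_nonneg (hI x).1] using (hI x).2) zero_le_one
    calc ζ.toFun h ≤ |ζ.toFun h| := le_abs_self _
      _ ≤ N * 1 := h2.trans (mul_le_mul_of_nonneg_left h3 hN)
      _ = N := mul_one N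
  unfold inducedSetFun
  split_ifs with hA hA'
  · obtain ⟨h, h1, hI⟩ := exists_cutoff hA
    refine le_trans (csInf_le ⟨0, ?_⟩ ⟨h, indicator_le_of_cutoff h1 fun x => (hI x).1, rfl⟩)
      (hb h hI)
    rintro _ ⟨u, hu, rfl⟩
    rw [← ζ.map_zero]
    exact ζ.mono' _ _ (nonneg_of_indicator_le hu)
  · refine Real.sSup_le ?_ hN
    rintro _ ⟨u, hu, rfl⟩
    refine (ζ.mono' u (u ⊔ 0) fun x => le_max_left _ _).trans (hb _ fun x =>
      ⟨le_max_right _ _, max_le ((hu x).trans ?_) zero_le_one⟩)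
    exact indicator_le_self' (fun _ _ => zero_le_one) x
  · exact hN

/-- a quasi-integral `ζ` is globally Lipschitz w.r.t. the uniform norm
if and only if its induced set function `τ_ζ` is bounded; in that case
`sup_{A ∈ 𝒜(X)} τ_ζ(A)` is a global Lipschitz constant for `ζ`. -/
theorem quasiIntegral_globally_lipschitz_iff_bounded {X : Type*} [TopologicalSpace X]
    [T2Space X] [LocallyCompactSpace X] (ζ : QuasiIntegral X) :
    ((∃ N : ℝ, 0 ≤ N ∧ ∀ f g : C_c(X, ℝ),
        |ζ.toFun f - ζ.toFun g| ≤ N * ⨆ x, |f x - g x|) ↔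
      BddAbove (inducedSetFun ζ '' Admissible X)) ∧
    (BddAbove (inducedSetFun ζ '' Admissible X) →
      ∀ f g : C_c(X, ℝ), |ζ.toFun f - ζ.toFun g| ≤
        sSup (inducedSetFun ζ '' Admissible X) * ⨆ x, |f x - g x|) := by
  have hlip : BddAbove (inducedSetFun ζ '' Admissible X) →
      ∀ f g : C_c(X, ℝ), |ζ.toFun f - ζ.toFun g| ≤
        sSup (inducedSetFun ζ '' Admissible X) * ⨆ x, |f x - g x| := fun hb f g => by
    have h := ζ.sub_le hb g f
    simp_rw [abs_sub_comm (g _) (f _)] at h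
    exact abs_sub_le_iff.2 ⟨ζ.sub_le hb f g, h⟩
  refine ⟨⟨?_, fun hb => ?_⟩, hlip⟩
  · rintro ⟨N, hN, hL⟩
    exact ⟨N, by rintro _ ⟨A, -, rfl⟩; exact inducedSetFun_le_of_lipschitz ζ hN hL A⟩
    -- the constant must be nonnegative, which `max` ensures without appeal to `τ_ζ ≥ 0`
  · exact ⟨max _ 0, le_max_right _ _, fun f g => (hlip hb f g).trans <|
      mul_le_mul_of_nonneg_right (le_max_left _ _) (Real.iSup_nonneg fun _ => abs_nonneg _)⟩

end
end
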